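/- arXiv:1407.2961 — 2 statements merged into one kernel-verified Lean document; each statement's English description precedes it below -/
import Mathlib

section
/- Under the stated hypotheses, the mean shift sequence (y_j) converges: there exists y* ∈ ℝ such that y_j → y* as j → ∞. -/
open Filter Finset
open scoped Topology RealInnerProductSpace

/-!
Convexity of the profile bounds the density from below by a constant minus a weighted sum of
squared distances to the data, with equality at the current point; the mean shift step goes
exactly to the minimiser of that sum. By the parallel axis identity each step therefore raises the
density by at least a multiple of the squared step length. The starting point and the convex hull
of the data form a compact set containing the whole orbit; on it that multiple is bounded away
from zero and the density is bounded, so the increasing density values force the step lengths to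
`0`.

On the line this suffices: a real sequence with vanishing steps accumulates at every point between
any two values which it passes below and above infinitely often, and every accumulation point is a
fixed point of the continuous map `T`. If the orbit oscillated it would enter an interval of fixed
points and stay where it landed.
-/

section Orbit

variable {y : ℕ → ℝ}

theorem mapClusterPt_of_tendsto_sub_zero
    (hstep : Tendsto (fun j ↦ y (j + 1) - y j) atTop (𝓝 0)) {z : ℝ}
    (hle : ∃ᶠ j in atTop, y j ≤ z) (hge : ∃ᶠ j in atTop, z ≤ y j) :
    MapClusterPt z atTop y := by
  refine Metric.nhds_basis_ball.mapClusterPt_iff_frequently.2 fun ε hε ↦ ?_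
  by_contra hfar
  have hev : ∀ᶠ j in atTop, ε ≤ |y j - z| ∧ |y (j + 1) - y j| < ε := by
    refine Eventually.and ?_ ?_
    · simpa only [not_frequently, Metric.mem_ball, Real.dist_eq, not_lt] using hfar
    · simpa only [Real.dist_eq, sub_zero] using Metric.tendsto_nhds.1 hstep ε hε
  obtain ⟨N, hN⟩ := eventually_atTop.1 hev
  obtain ⟨p, hNp, hp⟩ := frequently_atTop.1 hle N
  have below {j : ℕ} (hj : N ≤ j) (hjz : y j ≤ z) : y j ≤ z - ε := by
    have hdist := (hN j hj).1
    rw [abs_of_nonpos (by linarith)] at hdist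
    linarith
  have trapped : ∀ j ≥ p, y j ≤ z - ε := by
    intro j hj
    induction j, hj using Nat.le_induction with
    | base => exact below hNp hp
    | succ j hj ih =>
      have hjump := (abs_lt.1 (hN j (hNp.trans hj)).2).2
      exact below (by lia) (by linarith)
  obtain ⟨q, hpq, hq⟩ := frequently_atTop.1 hge p
  linarith [trapped q hpq]

theorem isFixedPt_of_mapClusterPt {E : Type*} [TopologicalSpace E] [AddGroup E] [ContinuousSub E]
    [T2Space E] {T : E → E} {u : ℕ → E} {z : E} (hT : ContinuousAt T z)
    (hu : ∀ j, u (j + 1) = T (u j)) (hstep : Tendsto (fun j ↦ u (j + 1) - u j) atTop (𝓝 0))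
    (hz : MapClusterPt z atTop u) : Function.IsFixedPt T z := by
  obtain ⟨U, hU, huz⟩ := mapClusterPt_iff_ultrafilter.1 hz
  have hsub : Tendsto (fun j ↦ u (j + 1) - u j) U (𝓝 (T z - z)) := by
    simpa only [hu, Function.comp_def] using (hT.tendsto.comp huz).sub huz
  exact sub_eq_zero.1 (tendsto_nhds_unique hsub (hstep.mono_left hU))

theorem exists_tendsto_of_orbit_of_tendsto_sub_zero {T : ℝ → ℝ} (hT : Continuous T)
    (hy : ∀ j, y (j + 1) = T (y j)) (hbdd : Bornology.IsBounded (Set.range y))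
    (hstep : Tendsto (fun j ↦ y (j + 1) - y j) atTop (𝓝 0)) :
    ∃ z, Tendsto y atTop (𝓝 z) := by
  refine tendsto_of_no_upcrossings dense_univ ?_ hbdd.bddAbove.isBoundedUnder_of_range
    hbdd.bddBelow.isBoundedUnder_of_range
  rintro a - b - hab ⟨ha, hb⟩
  have cluster {z : ℝ} (hz : z ∈ Set.Ioo a b) : MapClusterPt z atTop y :=
    mapClusterPt_of_tendsto_sub_zero hstep (ha.mono fun _ h ↦ h.le.trans hz.1.le)
      (hb.mono fun _ h ↦ hz.2.le.trans h.le)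
  have fixed {z : ℝ} (hz : z ∈ Set.Ioo a b) : T z = z :=
    isFixedPt_of_mapClusterPt hT.continuousAt hy hstep (cluster hz)
  obtain ⟨m, hm⟩ := Set.nonempty_Ioo.2 hab
  obtain ⟨j, hj⟩ := ((cluster hm).frequently (Ioo_mem_nhds hm.1 hm.2)).exists
  have const : ∀ i ≥ j, y i = y j := by
    intro i hi
    induction i, hi using Nat.le_induction with
    | base => rfl
    | succ i _ ih => rw [hy, ih, fixed hj]
  obtain ⟨i, hji, hi⟩ := frequently_atTop.1 ha j
  exact absurd hi (const i hji ▸ hj.1.le.not_gt)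

end Orbit

theorem tendsto_succ_sub_of_monotone_of_bddAbove {a : ℕ → ℝ} (ha : Monotone a)
    (hbdd : BddAbove (Set.range a)) : Tendsto (fun j ↦ a (j + 1) - a j) atTop (𝓝 0) := by
  have hlim := tendsto_atTop_ciSup ha hbdd
  simpa only [sub_self, Function.comp_def] using (hlim.comp (tendsto_add_atTop_nat 1)).sub hlim

theorem mul_sub_le_sub_of_convexOn {S : Set ℝ} {φ : ℝ → ℝ} {φ' s t : ℝ} (hφ : ConvexOn ℝ S φ)
    (hs : s ∈ S) (ht : t ∈ S) (hφ' : HasDerivWithinAt φ φ' S s) :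
    φ' * (t - s) ≤ φ t - φ s := by
  rcases lt_trichotomy s t with hst | rfl | hts
  · have hslope := hφ.le_slope_of_hasDerivWithinAt hs ht hst hφ'
    rwa [slope_def_field, le_div_iff₀ (sub_pos.2 hst)] at hslope
  · simp only [sub_self, mul_zero, le_refl]
  · have hslope := hφ.slope_le_of_hasDerivWithinAt ht hs hts hφ'
    rw [slope_def_field, div_le_iff₀ (sub_pos.2 hts)] at hslope
    linarith

/-- The parallel axis (Huygens–Steiner) identity. -/
theorem sum_mul_norm_sub_sq_sub_centerMass {E ι : Type*} [SeminormedAddCommGroup E]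
    [InnerProductSpace ℝ E] (s : Finset ι) {w : ι → ℝ} (x : ι → E)
    (hw : ∑ i ∈ s, w i ≠ 0) (z : E) :
    ∑ i ∈ s, w i * (‖z - x i‖ ^ 2 - ‖s.centerMass w x - x i‖ ^ 2) =
      (∑ i ∈ s, w i) * ‖s.centerMass w x - z‖ ^ 2 := by
  set m := s.centerMass w x with hm
  have hbalance : ∑ i ∈ s, w i • (m - x i) = 0 := by
    simp only [smul_sub, sum_sub_distrib, ← sum_smul, hm, centerMass, smul_inv_smul₀ hw, sub_self]
  have hexpand (i : ι) : w i * (‖z - x i‖ ^ 2 - ‖m - x i‖ ^ 2) =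
      w i * ‖m - z‖ ^ 2 + 2 * ⟪z - m, w i • (m - x i)⟫ := by
    rw [← sub_add_sub_cancel z m (x i), norm_add_sq_real, inner_smul_right, norm_sub_rev m z]
    ring
  rw [sum_congr rfl fun i _ ↦ hexpand i, sum_add_distrib, ← mul_sum, ← inner_sum, hbalance,
    inner_zero_right, mul_zero, add_zero, sum_mul]

section Kernel

variable {ι : Type*} [Fintype ι] {E : Type*} [SeminormedAddCommGroup E] {k g : ℝ → ℝ} {x : ι → E}
  {h : ℝ}

section KernelSum

/-- The unnormalised kernel sum with profile `φ` and bandwidth `h`. For the density profile `k` it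
is the kernel density estimate up to a constant factor; for `g = -k'` it is the total weight in the
denominator of the mean shift map. -/
noncomputable def kernelSum (φ : ℝ → ℝ) (h : ℝ) (x : ι → E) (z : E) : ℝ :=
  ∑ i, φ ((‖z - x i‖ / h) ^ 2)

theorem kernelSum_pos [Nonempty ι] (hg : ∀ t ∈ Set.Ici (0 : ℝ), 0 < g t) (z : E) :
    0 < kernelSum g h x z :=
  sum_pos (fun _ _ ↦ hg _ (Set.mem_Ici.2 (sq_nonneg _))) univ_nonempty

theorem continuous_comp_norm_sub_div_sq (hg : ContinuousOn g (Set.Ici 0)) (h : ℝ) (a : E) :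
    Continuous fun z ↦ g ((‖z - a‖ / h) ^ 2) :=
  hg.comp_continuous (by fun_prop) fun _ ↦ Set.mem_Ici.2 (sq_nonneg _)

theorem continuous_kernelSum (hg : ContinuousOn g (Set.Ici 0)) :
    Continuous (kernelSum g h x) :=
  continuous_finsetSum _ fun i _ ↦ continuous_comp_norm_sub_div_sq hg h (x i)

end KernelSum

section MeanShift

variable [NormedSpace ℝ E]

/-- The mean shift map `T`: the barycentre of the data weighted by the profile `g` around `z`.
If the total weight vanishes, it is `0`. -/
noncomputable def meanShift (g : ℝ → ℝ) (h : ℝ) (x : ι → E) (z : E) : E :=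
  univ.centerMass (fun i ↦ g ((‖z - x i‖ / h) ^ 2)) x

theorem meanShift_real (g : ℝ → ℝ) (h : ℝ) (x : ι → ℝ) (z : ℝ) :
    meanShift g h x z =
      (∑ i, x i * g (((z - x i) / h) ^ 2)) / ∑ i, g (((z - x i) / h) ^ 2) := by
  simp only [meanShift, centerMass, Real.norm_eq_abs, div_pow, sq_abs, smul_eq_mul, mul_comm (x _),
    ← div_eq_inv_mul]

theorem continuous_meanShift [Nonempty ι] (hg : ContinuousOn g (Set.Ici 0))
    (hg_pos : ∀ t ∈ Set.Ici (0 : ℝ), 0 < g t) : Continuous (meanShift g h x) :=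
  ((continuous_kernelSum hg).inv₀ fun z ↦ (kernelSum_pos hg_pos z).ne').smul <|
    continuous_finsetSum _ fun i _ ↦
      (continuous_comp_norm_sub_div_sq hg h (x i)).smul continuous_const

theorem meanShift_mem_convexHull [Nonempty ι] (hg : ∀ t ∈ Set.Ici (0 : ℝ), 0 < g t) (z : E) :
    meanShift g h x z ∈ convexHull ℝ (Set.range x) :=
  univ.centerMass_mem_convexHull (fun _ _ ↦ (hg _ (Set.mem_Ici.2 (sq_nonneg _))).le)
    (kernelSum_pos hg z) fun i _ ↦ Set.mem_range_self i

theorem exists_isCompact_range_subset_of_meanShift [Nonempty ι]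
    (hg : ∀ t ∈ Set.Ici (0 : ℝ), 0 < g t) {y : ℕ → E}
    (hy : ∀ j, y (j + 1) = meanShift g h x (y j)) : ∃ K, IsCompact K ∧ Set.range y ⊆ K := by
  refine ⟨insert (y 0) (convexHull ℝ (Set.range x)),
    ((Set.finite_range x).isCompact_convexHull ℝ).insert _, ?_⟩
  rintro _ ⟨_ | j, rfl⟩
  · exact Set.mem_insert _ _
  · exact Set.mem_insert_of_mem _ (hy j ▸ meanShift_mem_convexHull hg (y j))

end MeanShift

section Ascent

variable [InnerProductSpace ℝ E]

theorem kernelSum_mul_norm_meanShift_sub_sq_le (hk : ConvexOn ℝ (Set.Ici 0) k)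
    (hkg : ∀ t ∈ Set.Ici (0 : ℝ), HasDerivWithinAt k (-g t) (Set.Ici 0) t) {z : E}
    (hz : kernelSum g h x z ≠ 0) :
    kernelSum g h x z * (‖meanShift g h x z - z‖ / h) ^ 2 ≤
      kernelSum k h x (meanShift g h x z) - kernelSum k h x z := by
  set m := meanShift g h x z with hm
  let w (i : ι) : ℝ := g ((‖z - x i‖ / h) ^ 2)
  have hsq (r : ℝ) : r ^ 2 ∈ Set.Ici 0 := Set.mem_Ici.2 (sq_nonneg r)
  have tangent (i : ι) : w i * ((‖z - x i‖ / h) ^ 2 - (‖m - x i‖ / h) ^ 2) ≤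
      k ((‖m - x i‖ / h) ^ 2) - k ((‖z - x i‖ / h) ^ 2) := by
    have := mul_sub_le_sub_of_convexOn hk (hsq (‖z - x i‖ / h)) (hsq (‖m - x i‖ / h))
      (hkg _ (hsq _))
    linarith
  calc kernelSum g h x z * (‖m - z‖ / h) ^ 2
      = (∑ i, w i * (‖z - x i‖ ^ 2 - ‖m - x i‖ ^ 2)) / h ^ 2 := by
        rw [hm, meanShift, sum_mul_norm_sub_sq_sub_centerMass univ x hz, div_pow, mul_div_assoc,
          kernelSum]
    _ = ∑ i, w i * ((‖z - x i‖ / h) ^ 2 - (‖m - x i‖ / h) ^ 2) := by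
        simp only [sum_div, mul_div_assoc, sub_div, div_pow]
    _ ≤ ∑ i, (k ((‖m - x i‖ / h) ^ 2) - k ((‖z - x i‖ / h) ^ 2)) :=
        sum_le_sum fun i _ ↦ tangent i
    _ = kernelSum k h x m - kernelSum k h x z := sum_sub_distrib _ _

theorem kernelSum_le_kernelSum_meanShift [Nonempty ι] (hk : ConvexOn ℝ (Set.Ici 0) k)
    (hkg : ∀ t ∈ Set.Ici (0 : ℝ), HasDerivWithinAt k (-g t) (Set.Ici 0) t)
    (hg : ∀ t ∈ Set.Ici (0 : ℝ), 0 < g t) (z : E) :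
    kernelSum k h x z ≤ kernelSum k h x (meanShift g h x z) :=
  have hpos := kernelSum_pos hg z
  sub_nonneg.1 <| (mul_nonneg hpos.le (sq_nonneg _)).trans
    (kernelSum_mul_norm_meanShift_sub_sq_le hk hkg hpos.ne')

theorem tendsto_kernelSum_succ_sub [Nonempty ι] (hk : ConvexOn ℝ (Set.Ici 0) k)
    (hkg : ∀ t ∈ Set.Ici (0 : ℝ), HasDerivWithinAt k (-g t) (Set.Ici 0) t)
    (hg : ∀ t ∈ Set.Ici (0 : ℝ), 0 < g t) {y : ℕ → E}
    (hy : ∀ j, y (j + 1) = meanShift g h x (y j)) :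
    Tendsto (fun j ↦ kernelSum k h x (y (j + 1)) - kernelSum k h x (y j)) atTop (𝓝 0) := by
  obtain ⟨K, hK, hyK⟩ := exists_isCompact_range_subset_of_meanShift hg hy
  have hcont : Continuous (kernelSum k h x) :=
    continuous_kernelSum fun t ht ↦ (hkg t ht).continuousWithinAt
  refine tendsto_succ_sub_of_monotone_of_bddAbove (a := fun j ↦ kernelSum k h x (y j)) ?_ ?_
  · exact monotone_nat_of_le_succ fun j ↦ hy j ▸ kernelSum_le_kernelSum_meanShift hk hkg hg (y j)
  · refine (hK.bddAbove_image hcont.continuousOn).mono ?_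
    rintro _ ⟨j, rfl⟩
    exact Set.mem_image_of_mem _ (hyK ⟨j, rfl⟩)

theorem tendsto_succ_sub_of_meanShift [Nonempty ι] (hk : ConvexOn ℝ (Set.Ici 0) k)
    (hkg : ∀ t ∈ Set.Ici (0 : ℝ), HasDerivWithinAt k (-g t) (Set.Ici 0) t)
    (hg_cont : ContinuousOn g (Set.Ici 0)) (hg : ∀ t ∈ Set.Ici (0 : ℝ), 0 < g t) (hh : h ≠ 0)
    {y : ℕ → E} (hy : ∀ j, y (j + 1) = meanShift g h x (y j)) :
    Tendsto (fun j ↦ y (j + 1) - y j) atTop (𝓝 0) := by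
  obtain ⟨K, hK, hyK⟩ := exists_isCompact_range_subset_of_meanShift hg hy
  obtain ⟨z, -, hz⟩ := hK.exists_isMinOn ⟨y 0, hyK ⟨0, rfl⟩⟩
    (continuous_kernelSum (h := h) (x := x) hg_cont).continuousOn
  set δ := kernelSum g h x z
  have hδ : 0 < δ := kernelSum_pos hg z
  have hbound (j : ℕ) : ‖y (j + 1) - y j‖ ^ 2 ≤
      h ^ 2 / δ * (kernelSum k h x (y (j + 1)) - kernelSum k h x (y j)) := by
    have hascent : δ * (‖y (j + 1) - y j‖ / h) ^ 2 ≤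
        kernelSum k h x (y (j + 1)) - kernelSum k h x (y j) :=
      (mul_le_mul_of_nonneg_right (hz (hyK ⟨j, rfl⟩)) (sq_nonneg _)).trans <|
        hy j ▸ kernelSum_mul_norm_meanShift_sub_sq_le hk hkg (kernelSum_pos hg (y j)).ne'
    calc ‖y (j + 1) - y j‖ ^ 2 = h ^ 2 / δ * (δ * (‖y (j + 1) - y j‖ / h) ^ 2) := by field_simp
      _ ≤ _ := mul_le_mul_of_nonneg_left hascent (by positivity)
  have hsq : Tendsto (fun j ↦ ‖y (j + 1) - y j‖ ^ 2) atTop (𝓝 0) := by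
    refine squeeze_zero (fun _ ↦ sq_nonneg _) hbound ?_
    simpa only [mul_zero] using (tendsto_kernelSum_succ_sub hk hkg hg hy).const_mul (h ^ 2 / δ)
  rw [tendsto_zero_iff_norm_tendsto_zero]
  simpa only [Real.sqrt_sq (norm_nonneg _), Real.sqrt_zero] using hsq.sqrt

end Ascent

end Kernel

theorem mean_shift_converges_general {ι : Type*} [Fintype ι] [Nonempty ι] {k g : ℝ → ℝ}
    {x : ι → ℝ} {h : ℝ} (hk : ConvexOn ℝ (Set.Ici 0) k)
    (hkg : ∀ t ∈ Set.Ici (0 : ℝ), HasDerivWithinAt k (-g t) (Set.Ici 0) t)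
    (hg_cont : ContinuousOn g (Set.Ici 0)) (hg : ∀ t ∈ Set.Ici (0 : ℝ), 0 < g t) (hh : h ≠ 0)
    {y : ℕ → ℝ} (hy : ∀ j, y (j + 1) = meanShift g h x (y j)) :
    ∃ ystar : ℝ, Tendsto y atTop (𝓝 ystar) := by
  obtain ⟨K, hK, hyK⟩ := exists_isCompact_range_subset_of_meanShift hg hy
  exact exists_tendsto_of_orbit_of_tendsto_sub_zero (continuous_meanShift hg_cont hg) hy
    (hK.isBounded.subset hyK) (tendsto_succ_sub_of_meanShift hk hkg hg_cont hg hh hy)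

theorem mean_shift_converges
(n : ℕ) (hn : 0 < n) (x : Fin n → ℝ) (h : ℝ) (hh : 0 < h)
(c : ℝ) (hc : 0 < c)
    (k g : ℝ → ℝ)
    (hk_nonneg : ∀ t ∈ Set.Ici (0:ℝ), 0 ≤ k t)
    (hk_conv : ConvexOn ℝ (Set.Ici 0) k)
    (hk_smooth : ContDiff ℝ 1 k)
    (hk_anti : StrictAntiOn k (Set.Ici 0))
    (hg : ∀ t, g t = -(deriv k t))
    (hg_pos : ∀ t ∈ Set.Ici (0:ℝ), 0 < g t)
    (hg_anti : StrictAntiOn g (Set.Ici 0))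
    (f T : ℝ → ℝ)
    (hf : ∀ z, f z = c / (n * h) * ∑ i, k (((z - x i) / h) ^ 2))
    (hT : ∀ z, T z = (∑ i, x i * g (((z - x i) / h) ^ 2)) / (∑ i, g (((z - x i) / h) ^ 2)))
(y : ℕ → ℝ) (hy0 : ∃ i, y 0 = x i) (hyit : ∀ j, y (j + 1) = T (y j)) :
    ∃ ystar : ℝ, Tendsto y atTop (nhds ystar) := by
  have : Nonempty (Fin n) := Fin.pos_iff_nonempty.1 hn
  obtain rfl : g = fun t ↦ -deriv k t := funext hg
  have hk_deriv (t : ℝ) : HasDerivAt k (deriv k t) t :=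
    (hk_smooth.differentiable one_ne_zero t).hasDerivAt
  exact mean_shift_converges_general (g := fun t ↦ -deriv k t) (x := x) hk_conv
    (fun t _ ↦ (neg_neg (deriv k t)).symm ▸ (hk_deriv t).hasDerivWithinAt)
    hk_smooth.continuous_deriv_one.neg.continuousOn hg_pos hh.ne' fun j ↦ by
      rw [hyit, hT, meanShift_real]
end

section
/- Let m : ℝ → ℝ be differentiable, let x* satisfy m(x*) = x*, and suppose |m'(x)| > 1 for all x in [x* − ε, x* + ε] with ε > 0. If y ∈ [x* − ε, x* − ε/2] and |m(y) − y| < ε/2, then m(y) < x* − ε/2; in particular m(y) does not lie in the interval (x* − ε/2, x* + ε/2). -/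
theorem mul_sub_lt_abs_image_sub_of_lt_abs_hasDerivAt {f f' : ℝ → ℝ} {a b C : ℝ} (hab : a < b)
    (hcont : ContinuousOn f (Set.Icc a b)) (hderiv : ∀ z ∈ Set.Ioo a b, HasDerivAt f (f' z) z)
    (hC : ∀ z ∈ Set.Ioo a b, C < |f' z|) : C * (b - a) < |f b - f a| := by
  obtain ⟨c, hc, hslope⟩ := exists_hasDerivAt_eq_slope f f' hab hcont hderiv
  have hpos : 0 < b - a := sub_pos.mpr hab
  calc
    C * (b - a) < |f' c| * (b - a) := mul_lt_mul_of_pos_right (hC c hc) hpos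
    _ = |f b - f a| := by rw [hslope, abs_div, abs_of_pos hpos, div_mul_cancel₀ _ hpos.ne']

theorem fixed_point_repelling_escapes_left_general {m m' : ℝ → ℝ} {xstar y : ℝ}
    (hfix : m xstar = xstar) (hy : y < xstar) (hcont : ContinuousOn m (Set.Icc y xstar))
    (hderiv : ∀ z ∈ Set.Ioo y xstar, HasDerivAt m (m' z) z)
    (hexpand : ∀ z ∈ Set.Ioo y xstar, 1 < |m' z|) (hstep : m y - y ≤ 2 * (xstar - y)) :
    m y < y := by
  have hfar : xstar - y < |xstar - m y| := by
    simpa only [hfix, one_mul] using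
      mul_sub_lt_abs_image_sub_of_lt_abs_hasDerivAt hy hcont hderiv hexpand
  rcases lt_abs.mp hfar with hleft | hright
  · exact (sub_lt_sub_iff_left xstar).mp hleft
  · -- The image would lie beyond the reflection `2 * xstar - y` of `y` in the fixed point.
    linarith

theorem fixed_point_repelling_escapes_left
    (m : ℝ → ℝ) (hm : Differentiable ℝ m)
    (xstar : ℝ) (hfix : m xstar = xstar)
    (ε : ℝ) (hε : 0 < ε)
    (hder : ∀ z ∈ Set.Icc (xstar - ε) (xstar + ε), 1 < |deriv m z|)
    (y : ℝ) (hy : y ∈ Set.Icc (xstar - ε) (xstar - ε / 2))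
    (hstep : |m y - y| < ε / 2) :
    m y < xstar - ε / 2 ∧ m y ∉ Set.Ioo (xstar - ε / 2) (xstar + ε / 2) := by
  have hmove : m y < y :=
    fixed_point_repelling_escapes_left_general hfix (by linarith [hy.2]) hm.continuous.continuousOn
      (fun z _ ↦ (hm z).hasDerivAt)
      (fun z hz ↦ hder z ⟨hy.1.trans hz.1.le, by linarith [hz.2]⟩)
      (by linarith [hy.2, (abs_lt.mp hstep).2])
  have hescape : m y < xstar - ε / 2 := hmove.trans_le hy.2
  exact ⟨hescape, fun hmem ↦ hescape.not_gt hmem.1⟩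
end
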